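/- arXiv:2602.12061 — 5 statements merged into one kernel-verified Lean document; each statement's English description precedes it below -/
import Mathlib

section
/- Let δ > 0, c > 0, s₀ > 0, and let ω : ℝ → ℝ satisfy ω(r) > 0 for r ∈ (0, δ], with r ↦ ω(r)·r⁴ integrable on (0, δ). Define w₀(r) = (1/2)·c·ω(r)·s₀²·r. Then the iterated integral ∫₀^δ ∫₀^{2π} ∫_z^δ ∫₀^{arccos(z/r)} w₀(r)·r²·sin(φ) dφ dr dθ dz equals (π·c·s₀²/2)·∫₀^δ ω(r)·r⁴ dr. -/
open Real MeasureTheory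

/-!
The integral over `φ` is the elementary `∫₀^{arccos x} sin φ dφ = 1 - x`, which at `x = z / r` turns
the integrand into `(r - z) * (r * w r)`. Exchanging the order of integration over the triangle
`0 < z < r ≤ δ` leaves `∫₀^r (r - z) dz = r² / 2`, and the factor `2π` from `θ` gives
`π ∫₀^δ w r * r³ dr`. The exchange needs only the weight `r³`: the slices of the absolute value of
the integrand integrate to `|w r| * r³ / 2`, so Tonelli applies even where `w r * r²` is not
integrable at `0`.
-/

section Triangle

variable {E : Type*} [NormedAddCommGroup E] [NormedSpace ℝ E] {a b : ℝ}

lemma setIntegral_Ioc_indicator_Ioi {μ : Measure ℝ} (g : ℝ → E) {z : ℝ} (hz : z ∈ Set.Icc a b) :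
    ∫ r in Set.Ioc a b, (Set.Ioi z).indicator g r ∂μ = ∫ r in z..b, g r ∂μ := by
  rw [setIntegral_indicator measurableSet_Ioi, Set.Ioc_inter_Ioi, sup_eq_right.mpr hz.1,
    intervalIntegral.integral_of_le hz.2]

lemma setIntegral_Ioc_indicator_Iio {μ : Measure ℝ} [NullSingletonClass μ] (g : ℝ → E) {r : ℝ}
    (hr : r ∈ Set.Icc a b) :
    ∫ z in Set.Ioc a b, (Set.Iio r).indicator g z ∂μ = ∫ z in a..r, g z ∂μ := by
  have inter_eq : Set.Ioc a b ∩ Set.Iio r = Set.Ioo a r := by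
    ext z
    exact ⟨fun hz => ⟨hz.1.1, hz.2⟩, fun hz => ⟨⟨hz.1, hz.2.le.trans hr.2⟩, hz.2⟩⟩
  rw [setIntegral_indicator measurableSet_Iio, inter_eq, ← integral_Ioc_eq_integral_Ioo,
    intervalIntegral.integral_of_le hr.1]

theorem intervalIntegral_integral_swap_triangle {μ ν : Measure ℝ} [SFinite μ] [SFinite ν]
    [NullSingletonClass μ] (hab : a ≤ b) {f : ℝ → ℝ → E}
    (hf : IntegrableOn f.uncurry {p | p.1 < p.2}
      ((μ.restrict (Set.Ioc a b)).prod (ν.restrict (Set.Ioc a b)))) :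
    ∫ z in a..b, ∫ r in z..b, f z r ∂ν ∂μ = ∫ r in a..b, ∫ z in a..r, f z r ∂μ ∂ν := by
  rw [← integrable_indicator_iff (measurableSet_lt measurable_fst measurable_snd)] at hf
  rw [intervalIntegral.integral_of_le hab, intervalIntegral.integral_of_le hab]
  calc ∫ z in Set.Ioc a b, ∫ r in z..b, f z r ∂ν ∂μ
      = ∫ z in Set.Ioc a b, ∫ r in Set.Ioc a b,
          {p : ℝ × ℝ | p.1 < p.2}.indicator f.uncurry (z, r) ∂ν ∂μ :=
        setIntegral_congr_fun measurableSet_Ioc fun z hz =>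
          (setIntegral_Ioc_indicator_Ioi (f z) (Set.Ioc_subset_Icc_self hz)).symm
    _ = ∫ r in Set.Ioc a b, ∫ z in Set.Ioc a b,
          {p : ℝ × ℝ | p.1 < p.2}.indicator f.uncurry (z, r) ∂μ ∂ν :=
        integral_integral_swap hf
    _ = ∫ r in Set.Ioc a b, ∫ z in a..r, f z r ∂μ ∂ν :=
        setIntegral_congr_fun measurableSet_Ioc fun r hr =>
          setIntegral_Ioc_indicator_Iio (f · r) (Set.Ioc_subset_Icc_self hr)

end Triangle

section RepeatedIntegral

variable {E : Type*} [NormedAddCommGroup E] [NormedSpace ℝ E] {a b : ℝ} {g : ℝ → E} {n : ℕ}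

lemma integral_sub_left_pow (a r : ℝ) (n : ℕ) :
    ∫ z in a..r, (r - z) ^ n = (r - a) ^ (n + 1) / (n + 1) := by
  rw [intervalIntegral.integral_comp_sub_left (fun x => x ^ n), integral_pow]
  simp

lemma aestronglyMeasurable_of_sub_pow_smul
    (hg : AEStronglyMeasurable (fun r => (r - a) ^ n • g r) (volume.restrict (Set.Ioc a b))) :
    AEStronglyMeasurable g (volume.restrict (Set.Ioc a b)) := by
  have weight_meas : Measurable fun r : ℝ => ((r - a) ^ n)⁻¹ := by fun_prop
  refine (weight_meas.aestronglyMeasurable.smul hg).congr ?_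
  filter_upwards [ae_restrict_mem measurableSet_Ioc] with r hr
  exact inv_smul_smul₀ (pow_ne_zero n (sub_pos.mpr hr.1).ne') (g r)

lemma integrableOn_sub_pow_smul_triangle
    (hg : IntegrableOn (fun r => (r - a) ^ (n + 1) • g r) (Set.Ioc a b)) :
    IntegrableOn (Function.uncurry fun z r : ℝ => (r - z) ^ n • g r) {p | p.1 < p.2}
      ((volume.restrict (Set.Ioc a b)).prod (volume.restrict (Set.Ioc a b))) := by
  have triangle_meas : MeasurableSet {p : ℝ × ℝ | p.1 < p.2} :=
    measurableSet_lt measurable_fst measurable_snd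
  have kernel_meas : Measurable fun p : ℝ × ℝ => (p.2 - p.1) ^ n := by fun_prop
  have g_meas := aestronglyMeasurable_of_sub_pow_smul hg.aestronglyMeasurable
  have integrand_meas : AEStronglyMeasurable (Function.uncurry fun z r : ℝ => (r - z) ^ n • g r)
      ((volume.restrict (Set.Ioc a b)).prod (volume.restrict (Set.Ioc a b))) :=
    kernel_meas.aestronglyMeasurable.smul g_meas.comp_snd
  rw [← integrable_indicator_iff triangle_meas,
    integrable_prod_iff' (integrand_meas.indicator triangle_meas)]
  constructor
  · refine .of_forall fun r => ?_
    have slice_cont : Continuous fun z : ℝ => (r - z) ^ n • g r := by fun_prop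
    exact (slice_cont.integrableOn_Ioc (a := a) (b := b)).indicator measurableSet_Iio
  · refine (hg.norm.const_mul (1 / (n + 1) : ℝ)).congr ?_
    filter_upwards [ae_restrict_mem measurableSet_Ioc] with r hr
    have norm_slice (z : ℝ) :
        ‖{p : ℝ × ℝ | p.1 < p.2}.indicator
            (Function.uncurry fun z r : ℝ => (r - z) ^ n • g r) (z, r)‖
          = (Set.Iio r).indicator (fun z => (r - z) ^ n * ‖g r‖) z := by
      by_cases hz : z < r
      · simp [hz, norm_smul, abs_of_pos (sub_pos.mpr hz)]
      · simp [hz]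
    simp only [norm_slice]
    rw [setIntegral_Ioc_indicator_Iio _ (Set.Ioc_subset_Icc_self hr),
      intervalIntegral.integral_mul_const, integral_sub_left_pow, norm_smul,
      norm_of_nonneg (pow_nonneg (sub_nonneg.mpr hr.1.le) _)]
    ring

theorem integral_integral_sub_pow_smul [CompleteSpace E] (hab : a ≤ b)
    (hg : IntegrableOn (fun r => (r - a) ^ (n + 1) • g r) (Set.Ioc a b)) :
    ∫ z in a..b, ∫ r in z..b, (r - z) ^ n • g r
      = (1 / (n + 1) : ℝ) • ∫ r in a..b, (r - a) ^ (n + 1) • g r := by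
  rw [intervalIntegral_integral_swap_triangle hab (integrableOn_sub_pow_smul_triangle hg),
    ← intervalIntegral.integral_smul]
  refine intervalIntegral.integral_congr fun r _ => ?_
  simp only [intervalIntegral.integral_smul_const, integral_sub_left_pow, smul_smul]
  congr 1
  ring

end RepeatedIntegral

lemma integral_sin_zero_arccos {x : ℝ} (hx : x ∈ Set.Icc (-1) 1) :
    ∫ φ in (0 : ℝ)..arccos x, sin φ = 1 - x := by
  rw [integral_sin, cos_zero, cos_arccos hx.1 hx.2]

lemma integral_mul_sin_zero_arccos_div {z r : ℝ} (hz : 0 ≤ z) (hzr : z ≤ r) (u : ℝ) :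
    ∫ φ in (0 : ℝ)..arccos (z / r), u * r ^ 2 * sin φ = (r - z) * (u * r) := by
  have ratio_mem : z / r ∈ Set.Icc (-1) 1 :=
    ⟨neg_one_lt_zero.le.trans (div_nonneg hz (hz.trans hzr)), div_le_one_of_le₀ hzr (hz.trans hzr)⟩
  rw [intervalIntegral.integral_const_mul, integral_sin_zero_arccos ratio_mem]
  rcases eq_or_ne r 0 with rfl | hr
  · simp
  · field_simp

theorem energy_release_rate_critical_stretch_3D_general {δ : ℝ} (hδ : 0 ≤ δ) {w : ℝ → ℝ}
    (hw : IntegrableOn (fun r => w r * r ^ 3) (Set.Ioo 0 δ)) :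
    (∫ z in (0 : ℝ)..δ, ∫ _θ in (0 : ℝ)..(2 * π), ∫ r in z..δ,
        ∫ φ in (0 : ℝ)..arccos (z / r), w r * r ^ 2 * sin φ)
      = π * ∫ r in (0 : ℝ)..δ, w r * r ^ 3 := by
  have weight_eq (r : ℝ) : (r - 0) ^ 2 * (w r * r) = w r * r ^ 3 := by ring
  have hw_Ioc : IntegrableOn (fun r => (r - 0) ^ 2 • (w r * r)) (Set.Ioc 0 δ) := by
    simp only [smul_eq_mul, weight_eq]
    rwa [integrableOn_Ioc_iff_integrableOn_Ioo]
  have radial : ∫ z in (0 : ℝ)..δ, ∫ r in z..δ, (r - z) * (w r * r)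
      = 1 / 2 * ∫ r in (0 : ℝ)..δ, w r * r ^ 3 := by
    simpa only [pow_one, smul_eq_mul, Nat.cast_one, one_add_one_eq_two, weight_eq]
      using integral_integral_sub_pow_smul (n := 1) hδ hw_Ioc
  have angular {z : ℝ} (hz : z ∈ Set.uIcc 0 δ) :
      (∫ _θ in (0 : ℝ)..(2 * π), ∫ r in z..δ,
          ∫ φ in (0 : ℝ)..arccos (z / r), w r * r ^ 2 * sin φ)
        = 2 * π * ∫ r in z..δ, (r - z) * (w r * r) := by
    rw [Set.uIcc_of_le hδ] at hz
    rw [intervalIntegral.integral_const, sub_zero, smul_eq_mul]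
    congr 1
    refine intervalIntegral.integral_congr fun r hr => ?_
    rw [Set.uIcc_of_le hz.2] at hr
    exact integral_mul_sin_zero_arccos_div hz.1 hr.1 (w r)
  rw [intervalIntegral.integral_congr fun z hz => angular hz,
    intervalIntegral.integral_const_mul, radial]
  ring

/-- 3D energy release rate under the critical stretch criterion: with
`w₀(r) = (1/2)·c·ω(r)·s₀²·r`, the iterated integral
`∫₀^δ ∫₀^{2π} ∫_z^δ ∫₀^{arccos(z/r)} w₀(r)·r²·sin φ dφ dr dθ dz`
equals `(π·c·s₀²/2)·∫₀^δ ω(r)·r⁴ dr`. -/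
theorem energy_release_rate_critical_stretch_3D
    (δ c s₀ : ℝ) (hδ : 0 < δ) (hc : 0 < c) (hs₀ : 0 < s₀)
    (ω : ℝ → ℝ) (hω : ∀ r ∈ Set.Ioc (0:ℝ) δ, 0 < ω r)
    (hint : IntegrableOn (fun r : ℝ => ω r * r ^ 4) (Set.Ioo 0 δ))
    (w₀ : ℝ → ℝ) (hw₀ : ∀ r, w₀ r = (1/2) * c * ω r * s₀ ^ 2 * r) :
    (∫ z in (0:ℝ)..δ, ∫ θ in (0:ℝ)..(2 * π), ∫ r in z..δ,
        ∫ φ in (0:ℝ)..(Real.arccos (z / r)), w₀ r * r ^ 2 * Real.sin φ)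
      = (π * c * s₀ ^ 2 / 2) * ∫ r in (0:ℝ)..δ, ω r * r ^ 4 := by
  have weight_eq (r : ℝ) : w₀ r * r ^ 3 = c * s₀ ^ 2 / 2 * (ω r * r ^ 4) := by rw [hw₀]; ring
  rw [energy_release_rate_critical_stretch_3D_general hδ.le
    (by simpa only [weight_eq, IntegrableOn] using hint.const_mul (c * s₀ ^ 2 / 2))]
  simp only [weight_eq, intervalIntegral.integral_const_mul]
  ring
end

section
/- Let δ > 0, h > 0, c > 0, s₀ > 0, and let ω : ℝ → ℝ satisfy ω(r) > 0 for r ∈ (0, δ], with r ↦ ω(r)·r³ integrable on (0, δ). Define w₀(r) = (1/2)·c·ω(r)·s₀²·r. Then the iterated integral h·∫₀^δ ∫_z^δ ∫_{-arccos(z/r)}^{arccos(z/r)} w₀(r)·r dθ dr dz equals h·c·s₀²·∫₀^δ ω(r)·r³ dr. -/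
open Real MeasureTheory

/-!
The angular integral contributes a factor `2 * arccos (z / r)`, so the integrand has the form
`k (z / r) • f r` on the triangle `0 < z < r ≤ δ`. Extending `k` by zero outside `(0, 1)` absorbs
the triangle into the kernel; Fubini and the substitution `z = r * u` then factor the double
integral as `(∫ u in 0..1, k u) • ∫ r in 0..δ, r • f r`, and `∫ u in 0..1, arccos u = 1`.
-/

section Kernel

variable {E : Type*} [NormedAddCommGroup E] [NormedSpace ℝ E] {k : ℝ → ℝ} {f : ℝ → E}

lemma quasiMeasurePreserving_div_const {r : ℝ} (hr : r ≠ 0) :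
    Measure.QuasiMeasurePreserving (fun z : ℝ => z / r) volume volume := by
  simpa only [smul_eq_mul, div_eq_inv_mul] using
    Measure.quasiMeasurePreserving_smul (volume : Measure ℝ) (inv_ne_zero hr)

lemma integral_norm_comp_div_smul (k : ℝ → ℝ) (f : ℝ → E) (r : ℝ) :
    ∫ z, ‖k (z / r) • f r‖ = (∫ u, ‖k u‖) * ‖r • f r‖ := by
  simp only [norm_smul]
  rw [integral_mul_const, Measure.integral_comp_div (fun u => ‖k u‖) r, smul_eq_mul,
    Real.norm_eq_abs]
  ring

section Measure

variable {μ : Measure ℝ} [SFinite μ]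

lemma aestronglyMeasurable_comp_div_smul (hμ : ∀ᵐ r ∂μ, r ≠ 0)
    (hk : AEStronglyMeasurable k) (hf : AEStronglyMeasurable (fun r => r • f r) μ) :
    AEStronglyMeasurable (fun p : ℝ × ℝ => k (p.1 / p.2) • f p.2) (volume.prod μ) := by
  have hdiv : Measure.QuasiMeasurePreserving (fun p : ℝ × ℝ => p.1 / p.2)
      (volume.prod μ) volume :=
    QuasiMeasurePreserving.prod_of_left (by fun_prop)
      (hμ.mono fun _ hr => quasiMeasurePreserving_div_const hr)
  have hf' : AEStronglyMeasurable f μ := by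
    refine (measurable_inv.aestronglyMeasurable.smul hf).congr ?_
    filter_upwards [hμ] with r hr
    exact inv_smul_smul₀ hr (f r)
  exact (hk.comp_quasiMeasurePreserving hdiv).smul hf'.comp_snd

lemma integrable_comp_div_smul (hμ : ∀ᵐ r ∂μ, r ≠ 0)
    (hk : Integrable k) (hf : Integrable (fun r => r • f r) μ) :
    Integrable (fun p : ℝ × ℝ => k (p.1 / p.2) • f p.2) (volume.prod μ) := by
  rw [integrable_prod_iff' (aestronglyMeasurable_comp_div_smul hμ hk.1 hf.1)]
  refine ⟨hμ.mono fun r hr => (hk.comp_div hr).smul_const (f r), ?_⟩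
  simpa only [integral_norm_comp_div_smul] using hf.norm.const_mul (∫ u, ‖k u‖)

lemma integral_integral_comp_div_smul [CompleteSpace E] (hμ : ∀ᵐ r ∂μ, r ≠ 0)
    (hk : Integrable k) (hf : Integrable (fun r => r • f r) μ) :
    ∫ z, ∫ r, k (z / r) • f r ∂μ = (∫ u, k u) • ∫ r, |r| • f r ∂μ := by
  rw [integral_integral_swap (integrable_comp_div_smul hμ hk hf), ← integral_smul]
  refine integral_congr_ae (.of_forall fun r => ?_)
  simp only [integral_smul_const, Measure.integral_comp_div, smul_eq_mul]
  rw [mul_comm, mul_smul]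

end Measure

lemma indicator_Ioo_comp_div {z r : ℝ} (hz : 0 < z) (hr : 0 < r) :
    (Set.Ioo 0 1).indicator k (z / r) = (Set.Ioi z).indicator (fun r => k (z / r)) r := by
  simp only [Set.indicator_apply, Set.mem_Ioo, Set.mem_Ioi, div_pos hz hr, div_lt_one hr,
    true_and]

lemma setIntegral_indicator_comp_div_smul {δ z : ℝ} (hz : z ∈ Set.Ioc 0 δ) :
    ∫ r in Set.Ioc 0 δ, (Set.Ioo 0 1).indicator k (z / r) • f r
      = ∫ r in z..δ, k (z / r) • f r := by
  have hIoc : Set.Ioc 0 δ ∩ Set.Ioi z = Set.Ioc z δ := by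
    rw [Set.Ioc_inter_Ioi, max_eq_right hz.1.le]
  rw [intervalIntegral.integral_of_le hz.2, ← hIoc, ← setIntegral_indicator measurableSet_Ioi]
  refine setIntegral_congr_fun measurableSet_Ioc fun r hr => ?_
  simp only [indicator_Ioo_comp_div hz.1 hr.1, Set.indicator_smul_left]

lemma setIntegral_indicator_comp_div_smul_eq_zero {δ z : ℝ} (hz : z ∉ Set.Ioc 0 δ) :
    ∫ r in Set.Ioc 0 δ, (Set.Ioo 0 1).indicator k (z / r) • f r = 0 := by
  refine setIntegral_eq_zero_of_forall_eq_zero fun r hr => ?_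
  have hzr : z / r ∉ Set.Ioo 0 1 := fun h =>
    hz ⟨(div_pos_iff_of_pos_right hr.1).1 h.1, ((div_lt_one hr.1).1 h.2).le.trans hr.2⟩
  rw [Set.indicator_of_notMem hzr, zero_smul]

lemma integral_triangle_comp_div_smul [CompleteSpace E] {δ : ℝ} (hδ : 0 ≤ δ)
    (hk : IntervalIntegrable k volume 0 1)
    (hf : IntervalIntegrable (fun r => r • f r) volume 0 δ) :
    ∫ z in 0..δ, ∫ r in z..δ, k (z / r) • f r
      = (∫ u in 0..1, k u) • ∫ r in 0..δ, r • f r := by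
  have hne_zero : ∀ᵐ r ∂volume.restrict (Set.Ioc 0 δ), r ≠ 0 :=
    (ae_restrict_mem measurableSet_Ioc).mono fun _ hr => hr.1.ne'
  have hk' : Integrable ((Set.Ioo 0 1).indicator k) :=
    ((intervalIntegrable_iff_integrableOn_Ioo_of_le zero_le_one).1 hk).integrable_indicator
      measurableSet_Ioo
  calc ∫ z in 0..δ, ∫ r in z..δ, k (z / r) • f r
      = ∫ z in Set.Ioc 0 δ, ∫ r in Set.Ioc 0 δ, (Set.Ioo 0 1).indicator k (z / r) • f r := by
        rw [intervalIntegral.integral_of_le hδ]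
        exact setIntegral_congr_fun measurableSet_Ioc fun z hz =>
          (setIntegral_indicator_comp_div_smul hz).symm
    _ = ∫ z, ∫ r in Set.Ioc 0 δ, (Set.Ioo 0 1).indicator k (z / r) • f r :=
        setIntegral_eq_integral_of_forall_compl_eq_zero fun _ hz =>
          setIntegral_indicator_comp_div_smul_eq_zero hz
    _ = (∫ u, (Set.Ioo 0 1).indicator k u) • ∫ r in Set.Ioc 0 δ, |r| • f r :=
        integral_integral_comp_div_smul hne_zero hk' hf.1
    _ = (∫ u in 0..1, k u) • ∫ r in 0..δ, r • f r := by
        rw [integral_indicator measurableSet_Ioo, ← integral_Ioc_eq_integral_Ioo,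
          intervalIntegral.integral_of_le zero_le_one, intervalIntegral.integral_of_le hδ]
        congr 1
        exact setIntegral_congr_fun measurableSet_Ioc fun r hr => by
          simp only [abs_of_pos hr.1]

end Kernel

section Arccos

lemma hasDerivAt_mul_arccos_sub_sqrt {x : ℝ} (hx_neg_one : x ≠ -1) (hx_one : x ≠ 1) :
    HasDerivAt (fun u => u * arccos u - √(1 - u ^ 2)) (arccos x) x := by
  have hne : 1 - x ^ 2 ≠ 0 := sub_ne_zero.2 (sq_ne_one_iff.2 ⟨hx_one, hx_neg_one⟩).symm
  have hsqrt := ((hasDerivAt_pow 2 x).const_sub 1).sqrt hne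
  have harccos := hasDerivAt_arccos hx_neg_one hx_one
  refine (((hasDerivAt_id x).mul harccos).sub hsqrt).congr_deriv ?_
  simp only [id]
  ring

-- Outside `[-1, 1]` the formula persists: there `arccos` is constantly `π` or `0`, the root is `0`.
lemma integral_arccos (a b : ℝ) :
    ∫ u in a..b, arccos u
      = (b * arccos b - √(1 - b ^ 2)) - (a * arccos a - √(1 - a ^ 2)) :=
  integral_eq_of_hasDerivAt_off_countable _ _ (Set.toFinite {-1, 1}).countable
    (by have := continuous_arccos; fun_prop)
    (fun _ hx => hasDerivAt_mul_arccos_sub_sqrt (fun h => hx.2 (.inl h)) (fun h => hx.2 (.inr h)))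
    (continuous_arccos.intervalIntegrable _ _)

lemma integral_arccos_zero_one : ∫ u in 0..1, arccos u = 1 := by
  simp [integral_arccos]

lemma integral_triangle_arccos_sector {E : Type*} [NormedAddCommGroup E] [NormedSpace ℝ E]
    [CompleteSpace E] {f : ℝ → E} {δ : ℝ} (hδ : 0 ≤ δ)
    (hf : IntervalIntegrable (fun r => r • f r) volume 0 δ) :
    ∫ z in 0..δ, ∫ r in z..δ, ∫ _ in -arccos (z / r)..arccos (z / r), f r
      = (2 : ℝ) • ∫ r in 0..δ, r • f r := by
  have hk : IntervalIntegrable (fun u => 2 * arccos u) volume 0 1 :=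
    (continuous_arccos.const_mul 2).intervalIntegrable 0 1
  simp only [intervalIntegral.integral_const, sub_neg_eq_add, ← two_mul]
  rw [integral_triangle_comp_div_smul hδ hk hf, intervalIntegral.integral_const_mul,
    integral_arccos_zero_one, mul_one]

end Arccos

theorem energy_release_rate_critical_stretch_2D_general
    {δ : ℝ} (hδ : 0 ≤ δ) (h c s₀ : ℝ) {ω : ℝ → ℝ}
    (hint : IntegrableOn (fun r : ℝ => ω r * r ^ 3) (Set.Ioo 0 δ))
    {w₀ : ℝ → ℝ} (hw₀ : ∀ r, w₀ r = (1/2) * c * ω r * s₀ ^ 2 * r) :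
    h * (∫ z in 0..δ, ∫ r in z..δ, ∫ _ in -arccos (z / r)..arccos (z / r), w₀ r * r)
      = h * c * s₀ ^ 2 * ∫ r in 0..δ, ω r * r ^ 3 := by
  have hmoment : (fun r => r • (w₀ r * r)) = fun r => (1/2 * c * s₀ ^ 2) * (ω r * r ^ 3) := by
    funext r
    rw [hw₀, smul_eq_mul]
    ring
  have hf : IntervalIntegrable (fun r => r • (w₀ r * r)) volume 0 δ := by
    rw [hmoment]
    exact ((intervalIntegrable_iff_integrableOn_Ioo_of_le hδ).2 hint).const_mul _
  rw [integral_triangle_arccos_sector hδ hf, hmoment, intervalIntegral.integral_const_mul,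
    smul_eq_mul]
  ring

/-- 2D energy release rate under the critical stretch criterion: with
`w₀(r) = (1/2)·c·ω(r)·s₀²·r`, the iterated integral
`h·∫₀^δ ∫_z^δ ∫_{-arccos(z/r)}^{arccos(z/r)} w₀(r)·r dθ dr dz`
equals `h·c·s₀²·∫₀^δ ω(r)·r³ dr`. -/
theorem energy_release_rate_critical_stretch_2D
    (δ h c s₀ : ℝ) (hδ : 0 < δ) (hh : 0 < h) (hc : 0 < c) (hs₀ : 0 < s₀)
    (ω : ℝ → ℝ) (hω : ∀ r ∈ Set.Ioc (0:ℝ) δ, 0 < ω r)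
    (hint : IntegrableOn (fun r : ℝ => ω r * r ^ 3) (Set.Ioo 0 δ))
    (w₀ : ℝ → ℝ) (hw₀ : ∀ r, w₀ r = (1/2) * c * ω r * s₀ ^ 2 * r) :
    h * (∫ z in (0:ℝ)..δ, ∫ r in z..δ,
        ∫ θ in (-(Real.arccos (z / r)))..(Real.arccos (z / r)), w₀ r * r)
      = h * c * s₀ ^ 2 * ∫ r in (0:ℝ)..δ, ω r * r ^ 3 :=
  energy_release_rate_critical_stretch_2D_general hδ.le h c s₀ hint hw₀
end

section
/- (Nonequivalence of bond-failure criteria for 3D problems.) Let δ > 0, G₀ > 0, K > 0, and let ω : ℝ → ℝ satisfy ω(r) > 0 for r ∈ (0, δ], with I₃ := ∫₀^δ ω(r)·r³ dr and I₄ := ∫₀^δ ω(r)·r⁴ dr finite and positive. Define s₀² = (4·G₀/(9K))·(I₃/I₄) and s_c²(ρ) = (16·G₀/(9·K·δ⁴·ω(ρ)·ρ))·I₃. Then s_c²(ρ) = s₀² for all ρ ∈ (0, δ] if and only if there exists a constant β > 0 such that ω(ρ) = β/ρ for all ρ ∈ (0, δ]. Moreover, in that case, s₀² = s_c²(ρ)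 = 16·G₀/(27·K·δ) for all ρ ∈ (0, δ]. -/
open Real MeasureTheory

/-!
In dimension `d`, matching the energy release rate integrates the critical bond energy against
`r ^ d`. Hence the energy density criterion satisfies `s_c²(ρ) ω(ρ) ρ = s₀² m`, where
`m = (d + 1) / δ ^ (d + 1) * ∫₀^δ ω(r) r ^ (d + 1) dr` is the `r ^ d`-weighted mean of `ω(r) r`.
The criteria therefore agree exactly when `ω(ρ) ρ` is constantly equal to its own mean, and for
`ω(ρ) = β / ρ` both moments are integrals of powers.
-/

/-- The radial moment `∫₀^δ ω(r) r ^ n dr` of an influence function `ω` with horizon `δ`; it has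
the junk value `0` when the integrand is not integrable. -/
noncomputable def radialMoment (ω : ℝ → ℝ) (δ : ℝ) (n : ℕ) : ℝ :=
  ∫ r in (0 : ℝ)..δ, ω r * r ^ n

/-- The squared critical stretch `s₀²` in dimension `d`. The factor `C` collects the material
constants: `C = 4 G₀ / (9 K)` for `d = 3`. -/
noncomputable def criticalStretchSq (d : ℕ) (C : ℝ) (ω : ℝ → ℝ) (δ : ℝ) : ℝ :=
  C * (radialMoment ω δ d / radialMoment ω δ (d + 1))

/-- The squared stretch `s_c²(ρ)` at which a bond of length `ρ` fails under the critical energy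
density criterion in dimension `d`, with the same `C` as in `criticalStretchSq`. -/
noncomputable def energyDensityStretchSq (d : ℕ) (C : ℝ) (ω : ℝ → ℝ) (δ ρ : ℝ) : ℝ :=
  C * (d + 1) / (δ ^ (d + 1) * ω ρ * ρ) * radialMoment ω δ d

section

variable {d : ℕ} {C δ β ρ : ℝ} {ω : ℝ → ℝ}

theorem radialMoment_of_eq_div {n : ℕ} (hn : n ≠ 0) (hδ : 0 ≤ δ)
    (hω : ∀ r ∈ Set.Ioc 0 δ, ω r = β / r) : radialMoment ω δ n = β * (δ ^ n / n) := by
  obtain ⟨k, rfl⟩ := Nat.exists_eq_succ_of_ne_zero hn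
  have integrand_eq : ∀ r ∈ Set.uIoc 0 δ, ω r * r ^ (k + 1) = β * r ^ k := by
    intro r hr
    rw [Set.uIoc_of_le hδ] at hr
    have hr0 : r ≠ 0 := hr.1.ne'
    rw [hω r hr, pow_succ']
    field_simp
  calc radialMoment ω δ (k + 1) = ∫ r in (0 : ℝ)..δ, β * r ^ k :=
        intervalIntegral.integral_congr_ae (.of_forall integrand_eq)
    _ = β * (δ ^ (k + 1) / (k + 1 : ℕ)) := by
        simp [intervalIntegral.integral_const_mul, integral_pow]

theorem criticalStretchSq_of_eq_div (hd : d ≠ 0) (hδ : 0 < δ) (hβ : β ≠ 0)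
    (hω : ∀ r ∈ Set.Ioc 0 δ, ω r = β / r) :
    criticalStretchSq d C ω δ = C * (d + 1) / (d * δ) := by
  rw [criticalStretchSq, radialMoment_of_eq_div hd hδ.le hω,
    radialMoment_of_eq_div d.succ_ne_zero hδ.le hω, pow_succ]
  push_cast
  field_simp

theorem energyDensityStretchSq_of_eq_div (hd : d ≠ 0) (hβ : β ≠ 0)
    (hω : ∀ r ∈ Set.Ioc 0 δ, ω r = β / r) (hρ : ρ ∈ Set.Ioc 0 δ) :
    energyDensityStretchSq d C ω δ ρ = C * (d + 1) / (d * δ) := by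
  have hρ0 : 0 < ρ := hρ.1
  have hδ : 0 < δ := hρ0.trans_le hρ.2
  rw [energyDensityStretchSq, radialMoment_of_eq_div hd hδ.le hω, hω ρ hρ, pow_succ]
  field_simp

theorem energyDensityStretchSq_eq_criticalStretchSq_iff (hC : C ≠ 0) (hδ : δ ≠ 0) (hρ : ρ ≠ 0)
    (hωρ : ω ρ ≠ 0) (hI : radialMoment ω δ d ≠ 0) (hJ : radialMoment ω δ (d + 1) ≠ 0) :
    energyDensityStretchSq d C ω δ ρ = criticalStretchSq d C ω δ ↔
      ω ρ = (d + 1) * radialMoment ω δ (d + 1) / δ ^ (d + 1) / ρ := by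
  rw [energyDensityStretchSq, criticalStretchSq]
  field_simp
  exact eq_comm

theorem nonequivalence_bond_failure_criteria_3D_general (hd : d ≠ 0) (hC : C ≠ 0) (hδ : 0 < δ)
    (hω : ∀ r ∈ Set.Ioc 0 δ, ω r ≠ 0)
    (hI : radialMoment ω δ d ≠ 0) (hJ : 0 < radialMoment ω δ (d + 1)) :
    ((∀ ρ ∈ Set.Ioc 0 δ, energyDensityStretchSq d C ω δ ρ = criticalStretchSq d C ω δ) ↔
      ∃ β : ℝ, 0 < β ∧ ∀ ρ ∈ Set.Ioc 0 δ, ω ρ = β / ρ) ∧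
    ((∃ β : ℝ, 0 < β ∧ ∀ ρ ∈ Set.Ioc 0 δ, ω ρ = β / ρ) →
      criticalStretchSq d C ω δ = C * (d + 1) / (d * δ) ∧
      ∀ ρ ∈ Set.Ioc 0 δ, energyDensityStretchSq d C ω δ ρ = C * (d + 1) / (d * δ)) := by
  refine ⟨⟨fun h => ?_, ?_⟩, ?_⟩
  · refine ⟨(d + 1) * radialMoment ω δ (d + 1) / δ ^ (d + 1), by positivity, fun ρ hρ => ?_⟩
    exact (energyDensityStretchSq_eq_criticalStretchSq_iff hC hδ.ne' hρ.1.ne' (hω ρ hρ) hI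
      hJ.ne').1 (h ρ hρ)
  · rintro ⟨β, hβ, hωβ⟩ ρ hρ
    rw [energyDensityStretchSq_of_eq_div hd hβ.ne' hωβ hρ,
      criticalStretchSq_of_eq_div hd hδ hβ.ne' hωβ]
  · rintro ⟨β, hβ, hωβ⟩
    exact ⟨criticalStretchSq_of_eq_div hd hδ hβ.ne' hωβ,
      fun ρ hρ => energyDensityStretchSq_of_eq_div hd hβ.ne' hωβ hρ⟩

theorem energyDensityStretchSq_three (G₀ K : ℝ) :
    energyDensityStretchSq 3 (4 * G₀ / (9 * K)) ω δ ρ =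
      16 * G₀ / (9 * K * δ ^ 4 * ω ρ * ρ) * ∫ r in (0 : ℝ)..δ, ω r * r ^ 3 := by
  rw [energyDensityStretchSq, radialMoment]
  ring

end

/-- Nonequivalence of bond-failure criteria for 3D problems: `s_c²(ρ) = s₀²` for
all `ρ ∈ (0, δ]` iff there is `β > 0` with `ω(ρ) = β/ρ` on `(0, δ]`; and in that
case `s₀² = s_c²(ρ) = 16·G₀/(27·K·δ)`. -/
theorem nonequivalence_bond_failure_criteria_3D
    (δ G₀ K : ℝ) (hδ : 0 < δ) (hG₀ : 0 < G₀) (hK : 0 < K)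
    (ω : ℝ → ℝ) (hω : ∀ r ∈ Set.Ioc (0:ℝ) δ, 0 < ω r)
    (I₃ I₄ : ℝ)
    (hI₃ : I₃ = ∫ r in (0:ℝ)..δ, ω r * r ^ 3) (hI₃pos : 0 < I₃)
    (hI₄ : I₄ = ∫ r in (0:ℝ)..δ, ω r * r ^ 4) (hI₄pos : 0 < I₄)
    (s0sq : ℝ) (hs0sq : s0sq = (4 * G₀ / (9 * K)) * (I₃ / I₄))
    (scsq : ℝ → ℝ)
    (hscsq : ∀ ρ ∈ Set.Ioc (0:ℝ) δ,
      scsq ρ = (16 * G₀ / (9 * K * δ ^ 4 * ω ρ * ρ)) * I₃) :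
    ((∀ ρ ∈ Set.Ioc (0:ℝ) δ, scsq ρ = s0sq) ↔
      ∃ β : ℝ, 0 < β ∧ ∀ ρ ∈ Set.Ioc (0:ℝ) δ, ω ρ = β / ρ) ∧
    ((∃ β : ℝ, 0 < β ∧ ∀ ρ ∈ Set.Ioc (0:ℝ) δ, ω ρ = β / ρ) →
      s0sq = 16 * G₀ / (27 * K * δ) ∧
      ∀ ρ ∈ Set.Ioc (0:ℝ) δ, scsq ρ = 16 * G₀ / (27 * K * δ)) := by
  subst hI₃ hI₄
  have hs₀ : s0sq = criticalStretchSq 3 (4 * G₀ / (9 * K)) ω δ := hs0sq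
  have hs_c : ∀ ρ ∈ Set.Ioc 0 δ, scsq ρ = energyDensityStretchSq 3 (4 * G₀ / (9 * K)) ω δ ρ :=
    fun ρ hρ => (hscsq ρ hρ).trans (energyDensityStretchSq_three G₀ K).symm
  have common_value : 16 * G₀ / (27 * K * δ) =
      4 * G₀ / (9 * K) * ((3 : ℕ) + 1) / ((3 : ℕ) * δ) := by
    push_cast
    ring
  have hC : 4 * G₀ / (9 * K) ≠ 0 := by positivity
  simpa +contextual only [hs₀, hs_c, common_value] using
    nonequivalence_bond_failure_criteria_3D_general three_ne_zero hC hδ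
      (fun r hr => (hω r hr).ne') hI₃pos.ne' hI₄pos
end

section
/- (Bond-breaking behavior for 3D problems, case α < 1.) Let δ > 0, G₀ > 0, K > 0, and α < 1. For the influence function ω(r) = r^{-α}, with s₀² = 4·G₀·(5−α)/(9·K·(4−α)·δ) and s_c²(ρ) = (4/(5−α))·(δ/ρ)^{1−α}·s₀², the following hold: (i) for every ρ with 0 < ρ < (4/(5−α))^{1/(1−α)}·δ, one has s₀² < s_c²(ρ), so a bond of length ρ at stretch squared s₀² breaks under the critical stretch criterion but not under the critical energy density criterion; (ii) for every ρ with (4/(5−α))^{1/(1−α)}·δ < ρ ≤ δ, one has s_c²(ρ) < s₀², so a bond of length ρ at stretch squared s_c²(ρ) breaks under the critical energy density criterion but not under the critical stretch criterion. -/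
open Real

/-!
With `p = 1 - α > 0` and `c = 4 / (5 - α)`, the factor `c` can be absorbed into the power,
`s_c²(ρ) / s₀² = c * (δ / ρ) ^ p = (c ^ (1 / p) * δ / ρ) ^ p`,
so comparing `s_c²(ρ)` with `s₀²` amounts to comparing the base on the right with `1`.
Since `c ≤ 1`, the crossover length `c ^ (1 / p) * δ` lies within the horizon.
-/

section PowerLaw

variable {c p δ ρ : ℝ}

lemma mul_div_rpow_eq_rpow_inv_mul_div_rpow (hc : 0 ≤ c) (hp : p ≠ 0) (hδρ : 0 ≤ δ / ρ) :
    c * (δ / ρ) ^ p = (c ^ p⁻¹ * δ / ρ) ^ p := by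
  rw [mul_div_assoc, mul_rpow (rpow_nonneg hc _) hδρ, rpow_inv_rpow hc hp]

lemma one_lt_mul_div_rpow_iff (hc : 0 ≤ c) (hp : 0 < p) (hδ : 0 ≤ δ) (hρ : 0 < ρ) :
    1 < c * (δ / ρ) ^ p ↔ ρ < c ^ p⁻¹ * δ := by
  have base_nonneg : 0 ≤ c ^ p⁻¹ * δ / ρ := by positivity
  calc 1 < c * (δ / ρ) ^ p
      ↔ 1 ^ p < (c ^ p⁻¹ * δ / ρ) ^ p := by
        rw [mul_div_rpow_eq_rpow_inv_mul_div_rpow hc hp.ne' (by positivity), one_rpow]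
    _ ↔ 1 < c ^ p⁻¹ * δ / ρ := rpow_lt_rpow_iff zero_le_one base_nonneg hp
    _ ↔ ρ < c ^ p⁻¹ * δ := one_lt_div hρ

lemma mul_div_rpow_lt_one_iff (hc : 0 ≤ c) (hp : 0 < p) (hδ : 0 ≤ δ) (hρ : 0 < ρ) :
    c * (δ / ρ) ^ p < 1 ↔ c ^ p⁻¹ * δ < ρ := by
  have base_nonneg : 0 ≤ c ^ p⁻¹ * δ / ρ := by positivity
  calc c * (δ / ρ) ^ p < 1
      ↔ (c ^ p⁻¹ * δ / ρ) ^ p < 1 ^ p := by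
        rw [mul_div_rpow_eq_rpow_inv_mul_div_rpow hc hp.ne' (by positivity), one_rpow]
    _ ↔ c ^ p⁻¹ * δ / ρ < 1 := rpow_lt_rpow_iff base_nonneg zero_le_one hp
    _ ↔ c ^ p⁻¹ * δ < ρ := div_lt_one hρ

lemma rpow_inv_mul_le_self (hc : 0 ≤ c) (hc_le : c ≤ 1) (hp : 0 ≤ p) (hδ : 0 ≤ δ) :
    c ^ p⁻¹ * δ ≤ δ :=
  mul_le_of_le_one_left hδ (rpow_le_one hc hc_le (inv_nonneg.mpr hp))

end PowerLaw

lemma criticalStretch_sq_pos {δ G₀ K α : ℝ} (hδ : 0 < δ) (hG₀ : 0 < G₀) (hK : 0 < K)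
    (hα : α < 4) : 0 < 4 * G₀ * (5 - α) / (9 * K * (4 - α) * δ) := by
  have four_sub_pos : 0 < 4 - α := sub_pos.mpr hα
  have five_sub_pos : 0 < 5 - α := four_sub_pos.trans (by linarith)
  positivity

/-- Bond-breaking behavior for 3D problems, case `α < 1`: with
`s_c²(ρ) = (4/(5−α))·(δ/ρ)^{1−α}·s₀²`, (i) for `0 < ρ < (4/(5−α))^{1/(1−α)}·δ`,
`s₀² < s_c²(ρ)` (a bond at stretch squared `s₀²` breaks under the critical
stretch criterion but not under the critical energy density criterion); and
(ii) for `(4/(5−α))^{1/(1−α)}·δ < ρ ≤ δ`, `s_c²(ρ) < s₀²` (a bond at stretch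
squared `s_c²(ρ)` breaks under the critical energy density criterion but not
under the critical stretch criterion). -/
theorem bond_breaking_behavior_3D_alpha_lt_one
    (δ G₀ K α : ℝ) (hδ : 0 < δ) (hG₀ : 0 < G₀) (hK : 0 < K) (hα : α < 1)
    (s0sq : ℝ) (hs0sq : s0sq = 4 * G₀ * (5 - α) / (9 * K * (4 - α) * δ))
    (scsq : ℝ → ℝ)
    (hscsq : ∀ ρ ∈ Set.Ioc (0:ℝ) δ,
      scsq ρ = (4 / (5 - α)) * (δ / ρ) ^ ((1:ℝ) - α) * s0sq) :
    (∀ ρ : ℝ, 0 < ρ → ρ < (4 / (5 - α)) ^ ((1:ℝ) / (1 - α)) * δ →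
      s0sq < scsq ρ) ∧
    (∀ ρ : ℝ, (4 / (5 - α)) ^ ((1:ℝ) / (1 - α)) * δ < ρ → ρ ≤ δ →
      scsq ρ < s0sq) := by
  have hp : 0 < 1 - α := sub_pos.mpr hα
  have five_sub_pos : 0 < 5 - α := by linarith
  have hc : 0 ≤ 4 / (5 - α) := by positivity
  have hc_le : 4 / (5 - α) ≤ 1 := (div_le_one five_sub_pos).mpr (by linarith)
  have s0sq_pos : 0 < s0sq := hs0sq ▸ criticalStretch_sq_pos hδ hG₀ hK (by linarith)
  rw [one_div (1 - α)]
  refine ⟨fun ρ hρ hlt ↦ ?_, fun ρ hlt hρδ ↦ ?_⟩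
  · have hρδ : ρ ≤ δ := hlt.le.trans (rpow_inv_mul_le_self hc hc_le hp.le hδ.le)
    rw [hscsq ρ ⟨hρ, hρδ⟩]
    exact lt_mul_left s0sq_pos ((one_lt_mul_div_rpow_iff hc hp hδ.le hρ).mpr hlt)
  · have hρ : 0 < ρ := lt_of_le_of_lt (by positivity) hlt
    rw [hscsq ρ ⟨hρ, hρδ⟩]
    exact mul_lt_of_lt_one_left s0sq_pos ((mul_div_rpow_lt_one_iff hc hp hδ.le hρ).mpr hlt)
end

section
/- (Bond-breaking behavior for 3D problems, case 1 < α < 4.) Let δ > 0, G₀ > 0, K > 0, and 1 < α < 4. For the influence function ω(r) = r^{-α}, with s₀² = 4·G₀·(5−α)/(9·K·(4−α)·δ) and s_c²(ρ) = (4/(5−α))·(δ/ρ)^{1−α}·s₀², the following hold: (i) for every ρ with ((5−α)/4)^{1/(α−1)}·δ < ρ ≤ δ, one has s₀² < s_c²(ρ), so a bond of length ρ at stretch squared s₀² breaks under the critical stretch criterion but not under the critical energy density criterion; (ii) for every ρ with 0 < ρ < ((5−α)/4)^{1/(α−1)}·δ, one has s_c²(ρ) < s₀², so a bond of length ρ at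 stretch squared s_c²(ρ) breaks under the critical energy density criterion but not under the critical stretch criterion. -/
open Real

/-!
For `1 < α < 5` the energy-based critical stretch squared `s_c²(ρ)` is strictly increasing in the
bond length and takes the value `s₀²` exactly at `ρ = ((5 - α) / 4) ^ (1 / (α - 1)) * δ`, a length
that does not exceed the horizon. Comparing `s_c²(ρ)` with `s₀²` is therefore the same as comparing
`ρ` with this crossover length.
-/

namespace Peridynamics

/-- The squared critical stretch `s_c²(ρ)` of a bond of length `ρ` under the critical energy density
criterion, for the horizon `δ`, the influence function `r ^ (-α)` and the squared critical stretch
`s₀sq` of the critical stretch criterion. -/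
noncomputable def energyCriticalStretchSq (α δ s₀sq ρ : ℝ) : ℝ :=
  4 / (5 - α) * (δ / ρ) ^ (1 - α) * s₀sq

/-- The bond length at which the critical stretch and critical energy density criteria agree.
It is meaningful for `α < 5` and `α ≠ 1`. -/
noncomputable def crossoverLength (α δ : ℝ) : ℝ :=
  ((5 - α) / 4) ^ (1 / (α - 1)) * δ

variable {α δ s₀sq : ℝ}

lemma crossoverLength_pos (hα5 : α < 5) (hδ : 0 < δ) : 0 < crossoverLength α δ :=
  mul_pos (rpow_pos_of_pos (by linarith) _) hδ

lemma crossoverLength_le_horizon (hα1 : 1 < α) (hα5 : α < 5) (hδ : 0 ≤ δ) :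
    crossoverLength α δ ≤ δ := by
  have ratio_le_one : ((5 - α) / 4) ^ (1 / (α - 1)) ≤ 1 :=
    rpow_le_one (by linarith) (by linarith) (one_div_nonneg.2 (by linarith))
  exact mul_le_of_le_one_left hδ ratio_le_one

lemma horizon_div_crossoverLength_rpow (hα : α ≠ 1) (hα5 : α < 5) (hδ : δ ≠ 0) :
    (δ / crossoverLength α δ) ^ (1 - α) = (5 - α) / 4 := by
  have base_nonneg : 0 ≤ (5 - α) / 4 := by linarith
  have exponent_ne_zero : α - 1 ≠ 0 := sub_ne_zero.2 hα
  calc (δ / crossoverLength α δ) ^ (1 - α)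
      = (crossoverLength α δ / δ) ^ (α - 1) := by
        rw [← neg_sub, rpow_neg_eq_inv_rpow, inv_div]
    _ = (((5 - α) / 4) ^ (α - 1)⁻¹) ^ (α - 1) := by
        rw [crossoverLength, mul_div_cancel_right₀ _ hδ, one_div]
    _ = (5 - α) / 4 := rpow_inv_rpow base_nonneg exponent_ne_zero

lemma energyCriticalStretchSq_crossoverLength (hα : α ≠ 1) (hα5 : α < 5) (hδ : δ ≠ 0) :
    energyCriticalStretchSq α δ s₀sq (crossoverLength α δ) = s₀sq := by
  have five_sub_ne_zero : 5 - α ≠ 0 := (sub_pos.2 hα5).ne'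
  rw [energyCriticalStretchSq, horizon_div_crossoverLength_rpow hα hα5 hδ]
  field_simp

lemma energyCriticalStretchSq_strictMonoOn (hα1 : 1 < α) (hα5 : α < 5) (hδ : 0 < δ)
    (hs : 0 < s₀sq) : StrictMonoOn (energyCriticalStretchSq α δ s₀sq) (Set.Ioi 0) := by
  intro ρ (hρ : 0 < ρ) ρ' (hρ' : 0 < ρ') hlt
  have rpow_lt : (δ / ρ) ^ (1 - α) < (δ / ρ') ^ (1 - α) :=
    rpow_lt_rpow_of_neg (div_pos hδ hρ') (div_lt_div_of_pos_left hδ hρ hlt) (sub_neg.2 hα1)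
  have prefactor_pos : 0 < 4 / (5 - α) := div_pos four_pos (sub_pos.2 hα5)
  exact mul_lt_mul_of_pos_right (mul_lt_mul_of_pos_left rpow_lt prefactor_pos) hs

theorem lt_energyCriticalStretchSq_iff (hα1 : 1 < α) (hα5 : α < 5) (hδ : 0 < δ) (hs : 0 < s₀sq)
    {ρ : ℝ} (hρ : 0 < ρ) :
    s₀sq < energyCriticalStretchSq α δ s₀sq ρ ↔ crossoverLength α δ < ρ := by
  rw [← (energyCriticalStretchSq_strictMonoOn hα1 hα5 hδ hs).lt_iff_lt
    (crossoverLength_pos hα5 hδ) hρ, energyCriticalStretchSq_crossoverLength hα1.ne' hα5 hδ.ne']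

theorem energyCriticalStretchSq_lt_iff (hα1 : 1 < α) (hα5 : α < 5) (hδ : 0 < δ) (hs : 0 < s₀sq)
    {ρ : ℝ} (hρ : 0 < ρ) :
    energyCriticalStretchSq α δ s₀sq ρ < s₀sq ↔ ρ < crossoverLength α δ := by
  rw [← (energyCriticalStretchSq_strictMonoOn hα1 hα5 hδ hs).lt_iff_lt
    hρ (crossoverLength_pos hα5 hδ), energyCriticalStretchSq_crossoverLength hα1.ne' hα5 hδ.ne']

end Peridynamics

/-- Bond-breaking behavior for 3D problems, case `1 < α < 4`: with
`s_c²(ρ) = (4/(5−α))·(δ/ρ)^{1−α}·s₀²`, (i) for `((5−α)/4)^{1/(α−1)}·δ < ρ ≤ δ`,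
`s₀² < s_c²(ρ)` (a bond at stretch squared `s₀²` breaks under the critical
stretch criterion but not under the critical energy density criterion); and
(ii) for `0 < ρ < ((5−α)/4)^{1/(α−1)}·δ`, `s_c²(ρ) < s₀²` (a bond at stretch
squared `s_c²(ρ)` breaks under the critical energy density criterion but not
under the critical stretch criterion). -/
theorem bond_breaking_behavior_3D_one_lt_alpha_lt_four
    (δ G₀ K α : ℝ) (hδ : 0 < δ) (hG₀ : 0 < G₀) (hK : 0 < K)
    (hα1 : 1 < α) (hα4 : α < 4)
    (s0sq : ℝ) (hs0sq : s0sq = 4 * G₀ * (5 - α) / (9 * K * (4 - α) * δ))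
    (scsq : ℝ → ℝ)
    (hscsq : ∀ ρ ∈ Set.Ioc (0:ℝ) δ,
      scsq ρ = (4 / (5 - α)) * (δ / ρ) ^ ((1:ℝ) - α) * s0sq) :
    (∀ ρ : ℝ, ((5 - α) / 4) ^ ((1:ℝ) / (α - 1)) * δ < ρ → ρ ≤ δ →
      s0sq < scsq ρ) ∧
    (∀ ρ : ℝ, 0 < ρ → ρ < ((5 - α) / 4) ^ ((1:ℝ) / (α - 1)) * δ →
      scsq ρ < s0sq) := by
  have hα5 : α < 5 := by linarith
  have s0sq_pos : 0 < s0sq := by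
    have : 0 < 4 - α := sub_pos.2 hα4
    have : 0 < 5 - α := sub_pos.2 hα5
    rw [hs0sq]
    positivity
  constructor
  · intro ρ crossover_lt hρδ
    have hρ : 0 < ρ := (Peridynamics.crossoverLength_pos hα5 hδ).trans crossover_lt
    rw [hscsq ρ ⟨hρ, hρδ⟩]
    exact (Peridynamics.lt_energyCriticalStretchSq_iff hα1 hα5 hδ s0sq_pos hρ).2 crossover_lt
  · intro ρ hρ lt_crossover
    have hρδ : ρ ≤ δ :=
      lt_crossover.le.trans (Peridynamics.crossoverLength_le_horizon hα1 hα5 hδ.le)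
    rw [hscsq ρ ⟨hρ, hρδ⟩]
    exact (Peridynamics.energyCriticalStretchSq_lt_iff hα1 hα5 hδ s0sq_pos hρ).2 lt_crossover
end
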